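/- arXiv:1405.6521 — 2 statements merged into one kernel-verified Lean document; each statement's English description precedes it below -/
import Mathlib

section
/- In a twisted group algebra A = (K[(Z/2)^n], f) with basis {u_x} and product u_x · u_y = (−1)^{f(x,y)} u_{x+y}, suppose f admits a generating function α (so f(x,x)=α(x), f(x,y)+f(y,x)=α(x+y)+α(x)+α(y), and δf(x,y,z) is the third polarization of α). Then A is graded-alternative: u_x · (u_x · u_y) = (u_x · u_x) · u_y for all x, y ∈ (Z/2)^n. -/
/-!
Moving the brackets in a product of three basis elements multiplies it by the sign
`(-1) ^ δf(x, y, z)`, so it suffices that `δf(x, x, y) = 0`. In exponent two the terms of the third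
polarization of `α` at `(x, x, y)` cancel in pairs except for `α(0)`. The same holds at `(0, 0, 0)`,
where `δf` is four times `f(0, 0)`; hence `α(0) = 0`.
-/

section Cochains

variable {G M : Type*}

/-- The coboundary `δf` of a 2-cochain, written without signs and hence meant for coefficients
of exponent two. -/
def coboundary [Add G] [Add M] (f : G → G → M) (x y z : G) : M :=
  f x y + f x (y + z) + f (x + y) z + f y z

/-- The third polarization (cubic deviation) of `α`, written without signs and hence meant for
coefficients of exponent two. -/
def thirdPolarization [Add G] [Add M] (α : G → M) (x y z : G) : M :=
  α (x + y + z) + α (x + y) + α (x + z) + α (y + z) + α x + α y + α z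

variable [AddCommGroup M] [Module (ZMod 2) M]

theorem coboundary_zero_zero_zero [AddZeroClass G] (f : G → G → M) : coboundary f 0 0 0 = 0 := by
  simp only [coboundary, add_zero, ZModModule.add_self, zero_add]

variable [AddCommGroup G] [Module (ZMod 2) G]

theorem thirdPolarization_self_self (α : G → M) (x y : G) :
    thirdPolarization α x x y = α 0 := by
  calc thirdPolarization α x x y
      = α 0 + (α (x + y) + α (x + y)) + (α x + α x) + (α y + α y) := by
        simp only [thirdPolarization, ZModModule.add_self x, zero_add]
        abel
    _ = α 0 := by simp only [ZModModule.add_self, add_zero]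

theorem coboundary_self_self_eq_zero {f : G → G → M} {α : G → M}
    (h : ∀ x y z, coboundary f x y z = thirdPolarization α x y z) (x y : G) :
    coboundary f x x y = 0 :=
  calc coboundary f x x y
      = α 0 := by rw [h, thirdPolarization_self_self]
    _ = coboundary f 0 0 0 := by rw [h, thirdPolarization_self_self]
    _ = 0 := coboundary_zero_zero_zero f

end Cochains

theorem neg_one_pow_val_add {R : Type*} [Ring R] (a b : ZMod 2) :
    (-1 : R) ^ (a + b).val = (-1) ^ a.val * (-1) ^ b.val := by
  rw [ZMod.val_add, ← neg_one_pow_eq_pow_mod_two, pow_add]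

section TwistedMul

variable {K G : Type*} [Ring K] [AddCommGroup G] [Fintype G]

/-- The product of the twisted group algebra `(K[G], f)` of a finite group `G`, whose elements are
encoded as functions `G → K`; the basis element `u_x` is `Pi.single x 1`. -/
def twistedMul (f : G → G → ZMod 2) (a b : G → K) (z : G) : K :=
  ∑ x, (-1) ^ (f x (z - x)).val * a x * b (z - x)

variable [DecidableEq G]

theorem twistedMul_single_single (f : G → G → ZMod 2) (x y : G) (a b : K) :
    twistedMul f (Pi.single x a) (Pi.single y b)
      = Pi.single (x + y) ((-1) ^ (f x y).val * a * b) := by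
  ext z
  have sum_eq : twistedMul f (Pi.single x a) (Pi.single y b) z
      = if z - x = y then (-1) ^ (f x (z - x)).val * a * b else 0 := by
    rw [twistedMul, Fintype.sum_eq_single x fun w hw ↦ by
      rw [Pi.single_eq_of_ne hw, mul_zero, zero_mul]]
    simp only [Pi.single_eq_same, Pi.single_apply, mul_ite, mul_zero]
  rw [sum_eq, Pi.single_apply]
  simp only [sub_eq_iff_eq_add']
  split_ifs with hz
  · rw [hz, add_sub_cancel_left]
  · rfl

theorem twistedMul_single_one_assoc (f : G → G → ZMod 2) (x y z : G) :
    twistedMul f (Pi.single x (1 : K)) (twistedMul f (Pi.single y 1) (Pi.single z 1))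
      = (-1 : K) ^ (coboundary f x y z).val •
        twistedMul f (twistedMul f (Pi.single x 1) (Pi.single y 1)) (Pi.single z 1) := by
  have exponents : f x (y + z) + f y z = coboundary f x y z + (f (x + y) z + f x y) := by
    unfold coboundary
    linear_combination -(f x y + f (x + y) z) * CharTwo.two_eq_zero (R := ZMod 2)
  simp only [twistedMul_single_single, mul_one, ← neg_one_pow_val_add, ← Pi.single_smul,
    smul_eq_mul, exponents, add_assoc]

end TwistedMul

theorem stmt_13_general {K G : Type*} [Ring K] [AddCommGroup G] [Module (ZMod 2) G] [Fintype G]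
    [DecidableEq G] {f : G → G → ZMod 2} {α : G → ZMod 2}
    (h : ∀ x y z, coboundary f x y z = thirdPolarization α x y z) (x y : G) :
    twistedMul f (Pi.single x (1 : K)) (twistedMul f (Pi.single x 1) (Pi.single y 1))
      = twistedMul f (twistedMul f (Pi.single x 1) (Pi.single x 1)) (Pi.single y 1) := by
  rw [twistedMul_single_one_assoc, coboundary_self_self_eq_zero h, ZMod.val_zero, pow_zero,
    one_smul]

/-- in the twisted group algebra `(K[(ℤ/2)^n], f)` (realized as
functions `(ℤ/2)^n → K` with the twisted convolution product, `u_x` being the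
indicator of `x`), if `f` admits a generating function `α`, then the algebra
is graded-alternative on basis elements: `u_x · (u_x · u_y) = (u_x · u_x) · u_y`. -/
theorem stmt_13 (K : Type*) [Field K] (n : ℕ)
    (f : (Fin n → ZMod 2) → (Fin n → ZMod 2) → ZMod 2)
    (α : (Fin n → ZMod 2) → ZMod 2)
    (h1 : ∀ x, f x x = α x)
    (h2 : ∀ x y, f x y + f y x = α (x + y) + α x + α y)
    (h3 : ∀ x y z,
      f x y + f x (y + z) + f (x + y) z + f y z
        = α (x + y + z) + α (x + y) + α (x + z) + α (y + z) + α x + α y + α z) :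
    let mul : ((Fin n → ZMod 2) → K) → ((Fin n → ZMod 2) → K)
        → ((Fin n → ZMod 2) → K) := fun a b z =>
      ∑ x : Fin n → ZMod 2, (-1 : K) ^ (f x (z + x)).val * a x * b (z + x)
    let u : (Fin n → ZMod 2) → ((Fin n → ZMod 2) → K) := fun x =>
      Pi.single x 1
    ∀ x y : Fin n → ZMod 2, mul (u x) (mul (u x) (u y)) = mul (mul (u x) (u x)) (u y) := by
  intro mul u x y
  have mul_eq : mul = twistedMul f := by
    funext a b z
    simp only [mul, twistedMul, ZModModule.sub_eq_add]
  rw [mul_eq]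
  exact stmt_13_general h3 x y
end

section
/- The cubic form α_{0,3}(x) = x_1x_2x_3 + x_1x_2 + x_1x_3 + x_2x_3 + x_1 + x_2 + x_3 on (Z/2)^3 is not equivalent to the form α_{1,2}(x) = x_1x_2x_3 + x_1x_2 + x_1x_3 + x_2x_3 + x_2 + x_3: there is no G ∈ GL_3(Z/2) with α_{0,3}(Gx) = α_{1,2}(x) for all x. -/
/-! In any commutative ring `α₀₃(x) = (1 + x₁)(1 + x₂)(1 + x₃) - 1`. When `1` is the only unit, as
in `ℤ/2`, this vanishes at `x = 0` alone, whereas `α₁₂` vanishes at both `0` and `e₁`. An injective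
change of variables cannot carry two zeros to a single one. -/

section CommRing

variable {R : Type*} [CommRing R]

/-- The cubic form `α_{0,3}` over a commutative ring; the variables `x_1, x_2, x_3` are indexed
by `0, 1, 2`. -/
def alpha03 (x : Fin 3 → R) : R :=
  x 0 * x 1 * x 2 + x 0 * x 1 + x 0 * x 2 + x 1 * x 2 + x 0 + x 1 + x 2

/-- The cubic form `α_{1,2}` over a commutative ring, with the indexing of `alpha03`. -/
def alpha12 (x : Fin 3 → R) : R :=
  x 0 * x 1 * x 2 + x 0 * x 1 + x 0 * x 2 + x 1 * x 2 + x 1 + x 2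

theorem prod_one_add_eq_one_iff [Subsingleton Rˣ] {ι : Type*} [Fintype ι] {x : ι → R} :
    ∏ i, (1 + x i) = 1 ↔ x = 0 := by
  simp [Finset.prod_eq_one_iff, funext_iff]

theorem alpha03_eq_prod_sub_one (x : Fin 3 → R) : alpha03 x = ∏ i, (1 + x i) - 1 := by
  rw [alpha03, Fin.prod_univ_three]
  ring

theorem alpha03_eq_zero_iff [Subsingleton Rˣ] {x : Fin 3 → R} : alpha03 x = 0 ↔ x = 0 := by
  rw [alpha03_eq_prod_sub_one, sub_eq_zero, prod_one_add_eq_one_iff]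

theorem alpha12_zero : alpha12 (0 : Fin 3 → R) = 0 := by
  simp [alpha12]

theorem alpha12_single_zero (a : R) : alpha12 (Pi.single 0 a) = 0 := by
  simp [alpha12]

theorem stmt_17_general [Nontrivial R] [Subsingleton Rˣ] {G : (Fin 3 → R) → Fin 3 → R}
    (hG : Function.Injective G) : ¬ ∀ x, alpha03 (G x) = alpha12 x := by
  intro h
  have map_zero_of_zero {x : Fin 3 → R} (hx : alpha12 x = 0) : G x = 0 :=
    alpha03_eq_zero_iff.mp ((h x).trans hx)
  have single_eq_zero : (Pi.single 0 1 : Fin 3 → R) = 0 :=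
    hG ((map_zero_of_zero (alpha12_single_zero 1)).trans (map_zero_of_zero alpha12_zero).symm)
  exact one_ne_zero (Pi.single_eq_zero_iff.mp single_eq_zero)

end CommRing

/-- the cubic forms
`α_{0,3}(x) = x_1x_2x_3 + x_1x_2 + x_1x_3 + x_2x_3 + x_1 + x_2 + x_3` and
`α_{1,2}(x) = x_1x_2x_3 + x_1x_2 + x_1x_3 + x_2x_3 + x_2 + x_3`
on `(ℤ/2)^3` are not equivalent: no invertible ℤ/2-linear change of
coordinates `G` satisfies `α_{0,3}(Gx) = α_{1,2}(x)` for all `x`. -/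
theorem stmt_17 :
    let α03 : (Fin 3 → ZMod 2) → ZMod 2 := fun x =>
      x 0 * x 1 * x 2 + x 0 * x 1 + x 0 * x 2 + x 1 * x 2 + x 0 + x 1 + x 2
    let α12 : (Fin 3 → ZMod 2) → ZMod 2 := fun x =>
      x 0 * x 1 * x 2 + x 0 * x 1 + x 0 * x 2 + x 1 * x 2 + x 1 + x 2
    ¬ ∃ G : (Fin 3 → ZMod 2) ≃ₗ[ZMod 2] (Fin 3 → ZMod 2),
        ∀ x, α03 (G x) = α12 x := by
  rintro _ _ ⟨G, hG⟩
  exact stmt_17_general G.injective hG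
end
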